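/- Let u : ℝⁿ → [0,∞) be a nonnegative C¹ function which is a solution of div A(x,Du) + b(x)|Du|^α ≥ 0 in ℝⁿ. Then for every r > 0 one has max_{|x|=r} u(x) = max_{|x|≤r} u(x). -/

import Mathlib

open MeasureTheory Metric Set Filter
open scoped RealInnerProductSpace ENNReal

noncomputable section

abbrev Euc (n : ℕ) := EuclideanSpace ℝ (Fin n)

/-- Weak solution of `div A(x,Dv) + b(x)|Dv|^α ≥ a(x)` on an open set `U`:
for every nonnegative test function `φ ∈ C₀^∞(U)`,
`-∫ A(x,Dv)·Dφ + ∫ b |Dv|^α φ ≥ ∫ a φ`. -/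
def IsWeakSol {n : ℕ} (A : Euc n → Euc n → Euc n) (b : Euc n → ℝ) (α : ℝ)
    (a : Euc n → ℝ) (U : Set (Euc n)) (v : Euc n → ℝ) : Prop :=
  ∀ φ : Euc n → ℝ, ContDiff ℝ (⊤ : ℕ∞) φ → HasCompactSupport φ → tsupport φ ⊆ U →
    (∀ x, 0 ≤ φ x) →
    (∫ x in U, a x * φ x) ≤
      (-(∫ x in U, ⟪A x (gradient v x), gradient φ x⟫)) +
        ∫ x in U, b x * ‖gradient v x‖ ^ α * φ x

/-- Structural conditions on `A`: measurability, coercivity and growth. -/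
def StructCond {n : ℕ} (A : Euc n → Euc n → Euc n) (p C₁ C₂ : ℝ) : Prop :=
  Measurable (Function.uncurry A) ∧
    ∀ x ζ : Euc n, C₁ * ‖ζ‖ ^ p ≤ ⟪ζ, A x ζ⟫ ∧ ‖A x ζ‖ ≤ C₂ * ‖ζ‖ ^ (p - 1)

/-- Locally bounded function on `ℝⁿ`. -/
def LocBdd {n : ℕ} (b : Euc n → ℝ) : Prop :=
  ∀ K : Set (Euc n), IsCompact K → ∃ C, ∀ x ∈ K, b x ≤ C

/-- `M(r; u) = max_{|x| = r} u x`. -/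
def sphMax {n : ℕ} (u : Euc n → ℝ) (r : ℝ) : ℝ := sSup (u '' Metric.sphere (0 : Euc n) r)

/-- `g_θ(t) = inf_{s ∈ (t/θ, θ t)} g s`. -/
def ginf (g : ℝ → ℝ) (θ t : ℝ) : ℝ := sInf (g '' Set.Ioo (t / θ) (θ * t))

/-- The open annulus `{x : r₁ < |x| < r₂}`. -/
def Ann (n : ℕ) (r₁ r₂ : ℝ) : Set (Euc n) := {x : Euc n | r₁ < ‖x‖ ∧ ‖x‖ < r₂}

/-- `q_σ(r) = ess inf_{r/σ < |x| < σ r} q x`. -/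
def qinf {n : ℕ} (q : Euc n → ℝ) (σ r : ℝ) : ℝ :=
  essInf q (volume.restrict (Ann n (r / σ) (σ * r)))

/-- `f_σ(r) = q_σ(r) / (1 + r q_σ(r)^{(α-p+1)/α} ess sup_{r/σ<|x|<σr} b^{(p-1)/α})`. -/
def fdef {n : ℕ} (q b : Euc n → ℝ) (p α σ r : ℝ) : ℝ :=
  qinf q σ r /
    (1 + r * qinf q σ r ^ ((α - p + 1) / α) *
      essSup (fun x => b x ^ ((p - 1) / α)) (volume.restrict (Ann n (r / σ) (σ * r))))

/-! Suppose that `u` exceeds its boundary maximum on a bounded open set `Ω`. Write `M` for its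
maximum and, for levels `k < M` close to `M`, let `w = (u - k)⁺`. Since `α ≥ p - 1` and `Du` is
bounded on the compact set `{u ≥ k}`, the lower-order term satisfies `b |Du|^α ≤ B |Du|^(p-1)`
there. Testing with `w²` and absorbing by Young's inequality gives `∫ w |Du|^p ≤ L ∫ w^(p+1)`, where
the right-hand integral is only over the set `{u > k, Du ≠ 0}`, because all other integrands vanish
off it. Hence, for a larger `L` independent of `k`, the function `z = w^(p+1)` satisfies
`‖Dz‖₁ ≤ L ∫ z` over this set. By the Sobolev inequality for `W^{1,1}` the measure of
`{u > k, Du ≠ 0}` cannot be small. These sets, however, decrease to `∅` as `k ↑ M`, since `Du = 0`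
where `u = M`. -/

section Mollification

open scoped Topology Convolution ContDiff Pointwise

variable {E F : Type*} [NormedAddCommGroup E] [NormedAddCommGroup F] [NormedSpace ℝ F]

lemma exists_seq_contDiffBump_rOut {δ : ℝ} (hδ : 0 < δ) :
    ∃ η : ℕ → ContDiffBump (0 : E),
      (∀ j, (η j).rOut ≤ δ) ∧ Tendsto (fun j => (η j).rOut) atTop (𝓝 0) := by
  obtain ⟨ρ, -, hρ, hρ0⟩ := exists_seq_strictAnti_tendsto' hδ
  exact ⟨fun j => ⟨ρ j / 2, ρ j, half_pos (hρ j).1, half_lt_self (hρ j).1⟩,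
    fun j => (hρ j).2.le, hρ0⟩

variable [NormedSpace ℝ E] [FiniteDimensional ℝ E] [MeasurableSpace E] [BorelSpace E]
  {μ : Measure E} [μ.IsAddHaarMeasure]

lemma norm_normed_convolution_le [CompleteSpace F] (η : ContDiffBump (0 : E)) {f : E → F}
    {M : ℝ} (hf : Continuous f) (hM : ∀ x, ‖f x‖ ≤ M) (x : E) :
    ‖(η.normed μ ⋆[ContinuousLinearMap.lsmul ℝ ℝ, μ] f) x‖ ≤ M := by
  rw [← dist_zero_right]
  exact dist_convolution_le ((norm_nonneg _).trans (hM x)) η.support_normed_eq.subset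
    η.nonneg_normed η.integral_normed hf.aestronglyMeasurable
    fun y _ => by simpa using hM y

lemma fderiv_normed_convolution (η : ContDiffBump (0 : E)) {φ : E → ℝ} (hφ : ContDiff ℝ 1 φ)
    (hc : HasCompactSupport φ) (x : E) :
    fderiv ℝ (η.normed μ ⋆[ContinuousLinearMap.lsmul ℝ ℝ, μ] φ) x =
      (η.normed μ ⋆[ContinuousLinearMap.lsmul ℝ ℝ, μ] fderiv ℝ φ) x :=
  (hc.hasFDerivAt_convolution_right (ContinuousLinearMap.lsmul ℝ ℝ)
    (η.continuous_normed (μ := μ)).locallyIntegrable hφ x).fderiv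

lemma tsupport_normed_convolution_subset (η : ContDiffBump (0 : E)) (f : E → F) :
    tsupport (η.normed μ ⋆[ContinuousLinearMap.lsmul ℝ ℝ, μ] f) ⊆
      cthickening η.rOut (tsupport f) := by
  refine closure_minimal ?_ isClosed_cthickening
  calc Function.support (η.normed μ ⋆[ContinuousLinearMap.lsmul ℝ ℝ, μ] f)
      ⊆ Function.support f + Function.support (η.normed μ) := support_convolution_subset_swap _
    _ = thickening η.rOut (Function.support f) := by rw [η.support_normed_eq, add_ball_zero]
    _ ⊆ cthickening η.rOut (tsupport f) :=
      (thickening_subset_of_subset _ (subset_tsupport f)).trans (thickening_subset_cthickening _ _)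

lemma exists_seq_contDiff_tendsto {φ : E → ℝ} {U : Set E} (hφ : ContDiff ℝ 1 φ)
    (hc : HasCompactSupport φ) (hU : IsOpen U) (hφU : tsupport φ ⊆ U) (hφ0 : ∀ x, 0 ≤ φ x) :
    ∃ (K : Set E) (ψ : ℕ → E → ℝ) (M : ℝ), IsCompact K ∧ K ⊆ U ∧
      (∀ j, ContDiff ℝ ∞ (ψ j)) ∧ (∀ j, tsupport (ψ j) ⊆ K) ∧ (∀ j x, 0 ≤ ψ j x) ∧
      (∀ j x, ‖ψ j x‖ ≤ M) ∧ (∀ j x, ‖fderiv ℝ (ψ j) x‖ ≤ M) ∧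
      (∀ x, Tendsto (fun j => ψ j x) atTop (𝓝 (φ x))) ∧
      ∀ x, Tendsto (fun j => fderiv ℝ (ψ j) x) atTop (𝓝 (fderiv ℝ φ x)) := by
  have hφ' : Continuous (fderiv ℝ φ) := hφ.continuous_fderiv one_ne_zero
  obtain ⟨M₀, hM₀⟩ := hc.exists_bound_of_continuous hφ.continuous
  obtain ⟨M₁, hM₁⟩ := (hc.fderiv ℝ).exists_bound_of_continuous hφ'
  obtain ⟨δ, hδ, hδU⟩ := hc.isCompact.exists_cthickening_subset_open hU hφU
  obtain ⟨η, hηδ, hη⟩ := exists_seq_contDiffBump_rOut (E := E) hδ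
  refine ⟨cthickening δ (tsupport φ),
    fun j => (η j).normed Measure.addHaar ⋆[ContinuousLinearMap.lsmul ℝ ℝ, Measure.addHaar] φ,
    max M₀ M₁, hc.isCompact.cthickening, hδU, fun j => ?_, fun j => ?_, fun j x => ?_,
    fun j x => ?_, fun j x => ?_, fun x => ?_, fun x => ?_⟩
  · exact (η j).hasCompactSupport_normed.contDiff_convolution_left _ (η j).contDiff_normed
      hφ.continuous.locallyIntegrable
  · exact (tsupport_normed_convolution_subset _ _).trans (cthickening_mono (hηδ j) _)
  · exact integral_nonneg fun t => mul_nonneg ((η j).nonneg_normed t) (hφ0 _)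
  · exact (norm_normed_convolution_le _ hφ.continuous hM₀ x).trans (le_max_left _ _)
  · rw [fderiv_normed_convolution _ hφ hc]
    exact (norm_normed_convolution_le _ hφ' hM₁ x).trans (le_max_right _ _)
  · exact ContDiffBump.convolution_tendsto_right_of_continuous hη hφ.continuous x
  · simp_rw [fderiv_normed_convolution _ hφ hc]
    exact ContDiffBump.convolution_tendsto_right_of_continuous hη hφ' x

end Mollification

section WeakInequality

open scoped Topology ContDiff

lemma tendsto_setIntegral_clm_apply {X G H : Type*} [MeasurableSpace X] {μ : Measure X}
    [NormedAddCommGroup G] [NormedSpace ℝ G] [NormedAddCommGroup H] [NormedSpace ℝ H]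
    (L : G →L[ℝ] H →L[ℝ] ℝ) {K : Set X} {V : X → G} {T : ℕ → X → H} {T₀ : X → H} {M : ℝ}
    (hV : IntegrableOn V K μ) (hT : ∀ j, AEStronglyMeasurable (T j) (μ.restrict K))
    (hM : ∀ j x, ‖T j x‖ ≤ M) (hlim : ∀ x, Tendsto (fun j => T j x) atTop (𝓝 (T₀ x))) :
    Tendsto (fun j => ∫ x in K, L (V x) (T j x) ∂μ) atTop (𝓝 (∫ x in K, L (V x) (T₀ x) ∂μ)) := by
  refine tendsto_integral_of_dominated_convergence (fun x => ‖L‖ * ‖V x‖ * M)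
    (fun j => L.aestronglyMeasurable_comp₂ hV.aestronglyMeasurable (hT j))
    ((hV.norm.const_mul _).mul_const _) (fun j => .of_forall fun x => ?_)
    (.of_forall fun x => ((L (V x)).continuous.tendsto _).comp (hlim x))
  exact (L.le_opNorm₂ _ _).trans (mul_le_mul_of_nonneg_left (hM j x) (by positivity))

lemma integrable_clm_apply {X G H : Type*} [MeasurableSpace X] [TopologicalSpace X]
    [OpensMeasurableSpace X] {μ : Measure X}
    [NormedAddCommGroup G] [NormedSpace ℝ G] [NormedAddCommGroup H] [NormedSpace ℝ H]
    [SecondCountableTopologyEither X H]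
    (L : G →L[ℝ] H →L[ℝ] ℝ) {U : Set X} {V : X → G} {T : X → H}
    (hV : LocallyIntegrableOn V U μ) (hT : Continuous T) (hc : HasCompactSupport T)
    (hTU : tsupport T ⊆ U) : Integrable (fun x => L (V x) (T x)) μ := by
  obtain ⟨M, hM⟩ := hc.exists_bound_of_continuous hT
  have hVT := hV.integrableOn_compact_subset hTU hc
  have hsupp : Function.support (fun x => L (V x) (T x)) ⊆ tsupport T := fun x hx =>
    subset_tsupport T fun h => hx (by simp [h])
  rw [← integrableOn_iff_integrable_of_support_subset hsupp]
  refine ((hVT.norm.const_mul ‖L‖).mul_const M).mono'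
    (L.aestronglyMeasurable_comp₂ hVT.aestronglyMeasurable hT.aestronglyMeasurable)
    (.of_forall fun x => ?_)
  exact (L.le_opNorm₂ _ _).trans (mul_le_mul_of_nonneg_left (hM x) (by positivity))

variable {E : Type*} [NormedAddCommGroup E] [NormedSpace ℝ E] [MeasurableSpace E]

/-- The inequality `div V + g ≥ 0` on `U` in the weak sense, tested against nonnegative `C^m`
functions with compact support in `U`. -/
def WeakDivIneq (m : WithTop ℕ∞) (V : E → E) (g : E → ℝ) (U : Set E) (μ : Measure E) : Prop :=
  ∀ φ : E → ℝ, ContDiff ℝ m φ → HasCompactSupport φ → tsupport φ ⊆ U → (∀ x, 0 ≤ φ x) →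
    ∫ x, fderiv ℝ φ x (V x) ∂μ ≤ ∫ x, g x * φ x ∂μ

variable [FiniteDimensional ℝ E] [BorelSpace E]
  {μ : Measure E} {V : E → E} {g : E → ℝ} {U : Set E}

lemma WeakDivIneq.of_smooth (h : WeakDivIneq ∞ V g U μ) (hU : IsOpen U)
    (hV : LocallyIntegrableOn V U μ) (hg : LocallyIntegrableOn g U μ) :
    WeakDivIneq 1 V g U μ := by
  intro φ hφ hc hφU hφ0
  obtain ⟨K, ψ, M, hK, hKU, hψ, hψK, hψ0, hψM, hψM', hlim, hlim'⟩ :=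
    exists_seq_contDiff_tendsto hφ hc hU hφU hφ0
  have hψ_zero {j x} (hx : x ∉ K) : ψ j x = 0 :=
    image_eq_zero_of_notMem_tsupport fun h => hx (hψK j h)
  have hψ_fderiv_zero {j x} (hx : x ∉ K) : fderiv ℝ (ψ j) x = 0 :=
    fderiv_of_notMem_tsupport ℝ fun h => hx (hψK j h)
  have hφ_zero {x} (hx : x ∉ K) : φ x = 0 :=
    tendsto_nhds_unique (hlim x) (by simp [hψ_zero hx])
  have hφ_fderiv_zero {x} (hx : x ∉ K) : fderiv ℝ φ x = 0 :=
    tendsto_nhds_unique (hlim' x) (by simp [hψ_fderiv_zero hx])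
  have hleft := tendsto_setIntegral_clm_apply (ContinuousLinearMap.id ℝ (E →L[ℝ] ℝ)).flip
    (hV.integrableOn_compact_subset hKU hK)
    (fun j => ((hψ j).continuous_fderiv (by simp)).aestronglyMeasurable) hψM' hlim'
  have hright := tendsto_setIntegral_clm_apply (ContinuousLinearMap.mul ℝ ℝ)
    (hg.integrableOn_compact_subset hKU hK)
    (fun j => (hψ j).continuous.aestronglyMeasurable) hψM hlim
  have hsetIntegral {f : E → ℝ} (hf : ∀ x ∉ K, f x = 0) : ∫ x in K, f x ∂μ = ∫ x, f x ∂μ :=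
    setIntegral_eq_integral_of_forall_compl_eq_zero hf
  rw [← hsetIntegral (f := fun x => fderiv ℝ φ x (V x)) fun x hx => by simp [hφ_fderiv_zero hx],
    ← hsetIntegral (f := fun x => g x * φ x) fun x hx => by simp [hφ_zero hx]]
  refine le_of_tendsto_of_tendsto' hleft hright fun j => ?_
  have hj := h (ψ j) (hψ j) (hK.of_isClosed_subset (isClosed_tsupport _) (hψK j))
    ((hψK j).trans hKU) (hψ0 j)
  rwa [← hsetIntegral (f := fun x => fderiv ℝ (ψ j) x (V x))
      fun x hx => by simp [hψ_fderiv_zero hx],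
    ← hsetIntegral (f := fun x => g x * ψ j x) fun x hx => by simp [hψ_zero hx]] at hj

end WeakInequality

section Truncation

lemma mul_self_rpow_sub_one {t p : ℝ} (ht : 0 ≤ t) (hp : p ≠ 0) : t * t ^ (p - 1) = t ^ p := by
  rw [← Real.rpow_one_add' ht (by simpa using hp), add_sub_cancel]

lemma mul_rpow_sub_one_le_add {p ε a w : ℝ} (hp : 1 < p) (hε : 0 < ε) (ha : 0 ≤ a) (hw : 0 ≤ w) :
    w * a ^ (p - 1) ≤ ε * a ^ p + ε⁻¹ ^ (p - 1) * w ^ p := by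
  have hp0 : p ≠ 0 := by linarith
  rcases le_total w (ε * a) with h | h
  · calc w * a ^ (p - 1) ≤ ε * a * a ^ (p - 1) := by gcongr
      _ = ε * a ^ p := by rw [mul_assoc, mul_self_rpow_sub_one ha hp0]
      _ ≤ _ := le_add_of_nonneg_right (by positivity)
  · have haw : a ≤ ε⁻¹ * w := (le_inv_mul_iff₀ hε).2 h
    calc w * a ^ (p - 1) ≤ w * (ε⁻¹ * w) ^ (p - 1) := by gcongr
      _ = ε⁻¹ ^ (p - 1) * w ^ p := by
        rw [Real.mul_rpow (by positivity) hw, mul_left_comm, mul_self_rpow_sub_one hw hp0]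
      _ ≤ _ := le_add_of_nonneg_left (by positivity)

lemma hasDerivAt_max_rpow {q : ℝ} (hq : 1 < q) (t : ℝ) :
    HasDerivAt (fun s : ℝ => max s 0 ^ q) (q * max t 0 ^ (q - 1)) t := by
  have hq0 : q ≠ 0 := by linarith
  have hq1 : q - 1 ≠ 0 := by linarith
  have hmax : Continuous fun s : ℝ => max s 0 := by fun_prop
  refine hasDerivAt_of_hasDerivAt_of_ne' (x := 0) (fun s hs => ?_)
    (hmax.rpow_const fun _ => .inr (by linarith)).continuousAt
    (g := fun s => q * max s 0 ^ (q - 1))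
    (continuous_const.mul (hmax.rpow_const fun _ => .inr (by linarith))).continuousAt t
  rcases hs.lt_or_gt with hs | hs
  · rw [max_eq_right hs.le, Real.zero_rpow hq1, mul_zero]
    refine (hasDerivAt_const s (0 : ℝ)).congr_of_eventuallyEq ?_
    filter_upwards [Iio_mem_nhds hs] with r hr
    rw [max_eq_right (le_of_lt hr), Real.zero_rpow hq0]
  · rw [max_eq_left hs.le]
    refine (Real.hasDerivAt_rpow_const (.inr hq.le)).congr_of_eventuallyEq ?_
    filter_upwards [Ioi_mem_nhds hs] with r hr
    rw [max_eq_left (le_of_lt hr)]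

lemma contDiff_max_rpow {q : ℝ} (hq : 1 < q) : ContDiff ℝ 1 fun s : ℝ => max s 0 ^ q := by
  refine contDiff_one_iff_deriv.2
    ⟨fun t => (hasDerivAt_max_rpow hq t).differentiableAt, ?_⟩
  simp_rw [funext fun t => (hasDerivAt_max_rpow hq t).deriv]
  exact continuous_const.mul
    ((continuous_id.max continuous_const).rpow_const fun _ => .inr (by linarith))

variable {E : Type*}

/-- The truncation `(u - k)⁺` of `u` on `Ω`, extended by zero outside `Ω`. -/
def excess (Ω : Set E) (u : E → ℝ) (k : ℝ) : E → ℝ :=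
  Ω.indicator fun x => max (u x - k) 0

variable {Ω : Set E} {u : E → ℝ} {k : ℝ}

lemma excess_nonneg (x : E) : 0 ≤ excess Ω u k x :=
  indicator_nonneg (fun _ _ => le_max_right _ _) x

lemma excess_of_mem {x : E} (hx : x ∈ Ω) : excess Ω u k x = max (u x - k) 0 :=
  indicator_of_mem hx _

lemma support_excess : Function.support (excess Ω u k) = {x ∈ Ω | k < u x} := by
  ext x
  by_cases hx : x ∈ Ω <;> simp [excess, hx]

lemma support_excess_rpow {q : ℝ} (hq : q ≠ 0) :
    Function.support (fun x => excess Ω u k x ^ q) = {x ∈ Ω | k < u x} := by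
  rw [← support_excess]
  ext x
  simp [Real.rpow_eq_zero (excess_nonneg x) hq]

section Topology

variable [TopologicalSpace E] [T2Space E]

lemma isCompact_superlevel_of_le {l : ℝ} (hu : ContinuousOn u Ω)
    (hK : IsCompact {x ∈ Ω | k ≤ u x}) (hkl : k ≤ l) : IsCompact {x ∈ Ω | l ≤ u x} := by
  have heq : {x ∈ Ω | l ≤ u x} = {x ∈ Ω | k ≤ u x} ∩ u ⁻¹' Ici l :=
    Subset.antisymm (fun x hx => ⟨⟨hx.1, hkl.trans hx.2⟩, hx.2⟩) fun x hx => ⟨hx.1.1, hx.2⟩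
  rw [heq]
  exact hK.of_isClosed_subset ((hu.mono fun x hx => hx.1).preimage_isClosed_of_isClosed
    hK.isClosed isClosed_Ici) inter_subset_left

lemma tsupport_excess_rpow_subset (hK : IsCompact {x ∈ Ω | k ≤ u x}) {q : ℝ} (hq : q ≠ 0) :
    tsupport (fun x => excess Ω u k x ^ q) ⊆ {x ∈ Ω | k ≤ u x} :=
  closure_minimal ((support_excess_rpow hq).trans_subset fun _ hx => ⟨hx.1, hx.2.le⟩) hK.isClosed

lemma hasCompactSupport_excess_rpow (hK : IsCompact {x ∈ Ω | k ≤ u x}) {q : ℝ} (hq : q ≠ 0) :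
    HasCompactSupport fun x => excess Ω u k x ^ q :=
  hK.of_isClosed_subset (isClosed_tsupport _) (tsupport_excess_rpow_subset hK hq)

lemma continuous_excess_rpow_mul {f : E → ℝ} (hΩ : IsOpen Ω) (hu : ContinuousOn u Ω)
    (hf : ContinuousOn f Ω) (hK : IsCompact {x ∈ Ω | k ≤ u x}) {q : ℝ} (hq : 0 < q) :
    Continuous fun x => excess Ω u k x ^ q * f x := by
  refine ContinuousOn.continuous_of_tsupport_subset (s := Ω) ?_ hΩ
    ((closure_mono (Function.support_mul_subset_left _ _)).trans
      ((tsupport_excess_rpow_subset hK hq.ne').trans fun x hx => hx.1))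
  refine ContinuousOn.mul (ContinuousOn.congr ?_ fun x hx => by rw [excess_of_mem hx]) hf
  exact ((hu.sub continuousOn_const).sup continuousOn_const).rpow_const fun _ _ => .inr hq.le

lemma integrable_excess_rpow_mul [MeasurableSpace E] [BorelSpace E] {μ : Measure E}
    [IsFiniteMeasureOnCompacts μ] {f : E → ℝ} (hΩ : IsOpen Ω) (hu : ContinuousOn u Ω)
    (hf : ContinuousOn f Ω) (hK : IsCompact {x ∈ Ω | k ≤ u x}) {q : ℝ} (hq : 0 < q) :
    Integrable (fun x => excess Ω u k x ^ q * f x) μ :=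
  (continuous_excess_rpow_mul hΩ hu hf hK hq).integrable_of_hasCompactSupport
    (hasCompactSupport_excess_rpow hK hq.ne').mul_right

end Topology

variable [NormedAddCommGroup E] [NormedSpace ℝ E]

lemma contDiff_excess_rpow (hΩ : IsOpen Ω) (hu : ContDiffOn ℝ 1 u Ω)
    (hK : IsCompact {x ∈ Ω | k ≤ u x}) {q : ℝ} (hq : 1 < q) :
    ContDiff ℝ 1 fun x => excess Ω u k x ^ q := by
  refine contMDiff_iff_contDiff.1 (contMDiff_of_tsupport fun x hx =>
    contMDiffAt_iff_contDiffAt.2 ?_)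
  have hxΩ : x ∈ Ω := (tsupport_excess_rpow_subset hK (by linarith) hx).1
  refine ((contDiff_max_rpow hq).contDiffAt.comp x
    ((hu.contDiffAt (hΩ.mem_nhds hxΩ)).sub (contDiffAt_const (c := k)))).congr_of_eventuallyEq ?_
  filter_upwards [hΩ.mem_nhds hxΩ] with y hy
  simp [excess_of_mem hy]

lemma fderiv_excess_rpow (hΩ : IsOpen Ω) (hu : ContDiffOn ℝ 1 u Ω)
    (hK : IsCompact {x ∈ Ω | k ≤ u x}) {q : ℝ} (hq : 1 < q) (x : E) :
    fderiv ℝ (fun y => excess Ω u k y ^ q) x = (q * excess Ω u k x ^ (q - 1)) • fderiv ℝ u x := by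
  have hq1 : q - 1 ≠ 0 := by linarith
  by_cases hx : x ∈ tsupport fun y => excess Ω u k y ^ q
  · have hxΩ : x ∈ Ω := (tsupport_excess_rpow_subset hK (by linarith) hx).1
    have hux : HasFDerivAt (fun y => u y - k) (fderiv ℝ u x) x :=
      ((hu.differentiableOn one_ne_zero).differentiableAt (hΩ.mem_nhds hxΩ)).hasFDerivAt.sub_const k
    rw [excess_of_mem hxΩ]
    refine (((hasDerivAt_max_rpow hq (u x - k)).comp_hasFDerivAt x hux).congr_of_eventuallyEq
      ?_).fderiv
    filter_upwards [hΩ.mem_nhds hxΩ] with y hy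
    simp [excess_of_mem hy]
  · have hx0 : excess Ω u k x = 0 :=
      (Real.rpow_eq_zero (excess_nonneg x) (by linarith)).1
        (image_eq_zero_of_notMem_tsupport (f := fun y => excess Ω u k y ^ q) hx)
    rw [fderiv_of_notMem_tsupport ℝ hx, hx0, Real.zero_rpow hq1, mul_zero, zero_smul]

/-- The part of the superlevel set `{u > k}` in `Ω` on which `u` has no critical point. -/
def noncriticalSuperlevel (Ω : Set E) (u : E → ℝ) (k : ℝ) : Set E :=
  {x ∈ Ω | k < u x ∧ fderiv ℝ u x ≠ 0}

lemma isOpen_noncriticalSuperlevel (hΩ : IsOpen Ω) (hu : ContDiffOn ℝ 1 u Ω) :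
    IsOpen (noncriticalSuperlevel Ω u k) := by
  have hlevel : IsOpen (Ω ∩ u ⁻¹' Ioi k) := hu.continuousOn.isOpen_inter_preimage hΩ isOpen_Ioi
  have hcrit : IsOpen (Ω ∩ fderiv ℝ u ⁻¹' {0}ᶜ) :=
    (hu.continuousOn_fderiv_of_isOpen hΩ le_rfl).isOpen_inter_preimage hΩ isOpen_compl_singleton
  convert hlevel.inter hcrit using 1
  ext x
  simp only [noncriticalSuperlevel, mem_ofPred_eq, mem_inter_iff, mem_preimage, mem_Ioi,
    mem_compl_iff, mem_singleton_iff]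
  tauto

lemma setIntegral_noncriticalSuperlevel_excess_rpow_mul [MeasurableSpace E] {μ : Measure E}
    {s t : ℝ} (hs : s ≠ 0) (ht : t ≠ 0) :
    ∫ x in noncriticalSuperlevel Ω u k, excess Ω u k x ^ s * ‖fderiv ℝ u x‖ ^ t ∂μ =
      ∫ x, excess Ω u k x ^ s * ‖fderiv ℝ u x‖ ^ t ∂μ := by
  refine setIntegral_eq_integral_of_forall_compl_eq_zero fun x hx => ?_
  by_cases hd : fderiv ℝ u x = 0
  · simp [hd, Real.zero_rpow ht]
  · have hxs : x ∉ Function.support fun y => excess Ω u k y ^ s := by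
      rw [support_excess_rpow hs]
      exact fun h => hx ⟨h.1, h.2, hd⟩
    rw [Function.notMem_support.1 hxs, zero_mul]

end Truncation

section Energy

variable {E : Type*} [NormedAddCommGroup E] [NormedSpace ℝ E] [MeasurableSpace E] [BorelSpace E]
  {μ : Measure E} [IsFiniteMeasureOnCompacts μ] {Ω : Set E} {u : E → ℝ} {k p : ℝ}

lemma integrable_excess_rpow_mul_norm_fderiv_rpow (hΩ : IsOpen Ω) (hu : ContDiffOn ℝ 1 u Ω)
    (hK : IsCompact {x ∈ Ω | k ≤ u x}) {s t : ℝ} (hs : 0 < s) (ht : 0 ≤ t) :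
    Integrable (fun x => excess Ω u k x ^ s * ‖fderiv ℝ u x‖ ^ t) μ :=
  integrable_excess_rpow_mul hΩ hu.continuousOn
    ((hu.continuousOn_fderiv_of_isOpen hΩ le_rfl).norm.rpow_const fun _ _ => .inr ht) hK hs

-- The exponent `(1 : ℝ)` keeps every energy in the form `∫ w^s |Du|^t` with real `s` and `t`.
lemma caccioppoli_excess [FiniteDimensional ℝ E] {V : E → E} {g : E → ℝ} {C₁ B : ℝ}
    (h : WeakDivIneq 1 V g Ω μ) (hΩ : IsOpen Ω) (hV : LocallyIntegrableOn V Ω μ)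
    (hg : LocallyIntegrableOn g Ω μ) (hu : ContDiffOn ℝ 1 u Ω)
    (hK : IsCompact {x ∈ Ω | k ≤ u x}) (hp : 1 < p)
    (hcoer : ∀ x ∈ Ω, C₁ * ‖fderiv ℝ u x‖ ^ p ≤ fderiv ℝ u x (V x))
    (hgB : ∀ x ∈ Ω, k ≤ u x → g x ≤ B * ‖fderiv ℝ u x‖ ^ (p - 1)) :
    2 * C₁ * ∫ x, excess Ω u k x ^ (1 : ℝ) * ‖fderiv ℝ u x‖ ^ p ∂μ ≤
      B * ∫ x, excess Ω u k x ^ (2 : ℝ) * ‖fderiv ℝ u x‖ ^ (p - 1) ∂μ := by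
  set φ : E → ℝ := fun x => excess Ω u k x ^ (2 : ℝ)
  have hφ : ContDiff ℝ 1 φ := contDiff_excess_rpow hΩ hu hK one_lt_two
  have hc : HasCompactSupport φ := hasCompactSupport_excess_rpow hK two_ne_zero
  have hφK : tsupport φ ⊆ {x ∈ Ω | k ≤ u x} := tsupport_excess_rpow_subset hK two_ne_zero
  have hφΩ : tsupport φ ⊆ Ω := fun x hx => (hφK hx).1
  have hφ0 (x : E) : 0 ≤ φ x := Real.rpow_nonneg (excess_nonneg x) _
  have hVφ : Integrable (fun x => fderiv ℝ φ x (V x)) μ :=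
    integrable_clm_apply (ContinuousLinearMap.id ℝ (E →L[ℝ] ℝ)).flip hV
      (hφ.continuous_fderiv one_ne_zero) (hc.fderiv ℝ) ((tsupport_fderiv_subset ℝ).trans hφΩ)
  have hgφ : Integrable (fun x => g x * φ x) μ :=
    integrable_clm_apply (ContinuousLinearMap.mul ℝ ℝ) hg hφ.continuous hc hφΩ
  rw [← integral_const_mul, ← integral_const_mul]
  calc ∫ x, 2 * C₁ * (excess Ω u k x ^ (1 : ℝ) * ‖fderiv ℝ u x‖ ^ p) ∂μ
      ≤ ∫ x, fderiv ℝ φ x (V x) ∂μ := by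
        refine integral_mono ((integrable_excess_rpow_mul_norm_fderiv_rpow hΩ hu hK one_pos
          (by linarith)).const_mul _) hVφ fun x => ?_
        rw [fderiv_excess_rpow hΩ hu hK one_lt_two]
        by_cases hx : x ∈ Ω
        · have hcoer_mul := mul_le_mul_of_nonneg_left (hcoer x hx)
            (excess_nonneg (Ω := Ω) (u := u) (k := k) x)
          norm_num
          linarith
        · norm_num [excess, hx]
    _ ≤ ∫ x, g x * φ x ∂μ := h φ hφ hc hφΩ hφ0
    _ ≤ ∫ x, B * (φ x * ‖fderiv ℝ u x‖ ^ (p - 1)) ∂μ := by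
        refine integral_mono hgφ ((integrable_excess_rpow_mul_norm_fderiv_rpow hΩ hu hK two_pos
          (by linarith)).const_mul _) fun x => ?_
        by_cases hx : x ∈ tsupport φ
        · have hgB_mul := mul_le_mul_of_nonneg_right (hgB x (hφK hx).1 (hφK hx).2) (hφ0 x)
          linarith
        · simp [image_eq_zero_of_notMem_tsupport hx]

lemma integral_excess_rpow_mul_le_add (hΩ : IsOpen Ω) (hu : ContDiffOn ℝ 1 u Ω)
    (hK : IsCompact {x ∈ Ω | k ≤ u x}) (hp : 0 < p) {s t a b : ℝ} (hs : 0 < s) (ht : 0 < t)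
    (h : ∀ w d : ℝ, 0 ≤ w → 0 ≤ d → w ^ s * d ^ t ≤ a * (w ^ (1 : ℝ) * d ^ p) + b * w ^ (p + 1)) :
    ∫ x, excess Ω u k x ^ s * ‖fderiv ℝ u x‖ ^ t ∂μ ≤
      a * ∫ x, excess Ω u k x ^ (1 : ℝ) * ‖fderiv ℝ u x‖ ^ p ∂μ +
        b * ∫ x in noncriticalSuperlevel Ω u k, excess Ω u k x ^ (p + 1) ∂μ := by
  have hint {s t : ℝ} (hs : 0 < s) (ht : 0 < t) :=
    (integrable_excess_rpow_mul_norm_fderiv_rpow (μ := μ) hΩ hu hK hs ht.le).integrableOn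
      (s := noncriticalSuperlevel Ω u k)
  have hw : Integrable (fun x => excess Ω u k x ^ (p + 1)) μ := by
    simpa using integrable_excess_rpow_mul (f := 1) hΩ hu.continuousOn continuousOn_const hK
      (by linarith : 0 < p + 1)
  rw [← setIntegral_noncriticalSuperlevel_excess_rpow_mul hs.ne' ht.ne',
    ← setIntegral_noncriticalSuperlevel_excess_rpow_mul one_ne_zero hp.ne',
    ← integral_const_mul, ← integral_const_mul,
    ← integral_add ((hint one_pos hp).const_mul a) (hw.integrableOn.const_mul b)]
  exact integral_mono (hint hs ht)
    (((hint one_pos hp).const_mul a).add (hw.integrableOn.const_mul b))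
    fun x => h _ _ (excess_nonneg x) (norm_nonneg _)

lemma integral_excess_sq_mul_norm_fderiv_rpow_le (hΩ : IsOpen Ω) (hu : ContDiffOn ℝ 1 u Ω)
    (hK : IsCompact {x ∈ Ω | k ≤ u x}) (hp : 1 < p) {ε : ℝ} (hε : 0 < ε) :
    ∫ x, excess Ω u k x ^ (2 : ℝ) * ‖fderiv ℝ u x‖ ^ (p - 1) ∂μ ≤
      ε * ∫ x, excess Ω u k x ^ (1 : ℝ) * ‖fderiv ℝ u x‖ ^ p ∂μ +
        ε⁻¹ ^ (p - 1) * ∫ x in noncriticalSuperlevel Ω u k, excess Ω u k x ^ (p + 1) ∂μ := by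
  refine integral_excess_rpow_mul_le_add hΩ hu hK (by linarith) two_pos (by linarith)
    fun w d hw hd => ?_
  calc w ^ (2 : ℝ) * d ^ (p - 1) = w * (w * d ^ (p - 1)) := by rw [Real.rpow_two]; ring
    _ ≤ w * (ε * d ^ p + ε⁻¹ ^ (p - 1) * w ^ p) := by
      gcongr
      exact mul_rpow_sub_one_le_add hp hε hd hw
    _ = _ := by rw [Real.rpow_add_one' hw (by linarith), Real.rpow_one]; ring

lemma integral_excess_rpow_mul_norm_fderiv_le (hΩ : IsOpen Ω) (hu : ContDiffOn ℝ 1 u Ω)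
    (hK : IsCompact {x ∈ Ω | k ≤ u x}) (hp : 1 < p) :
    ∫ x, excess Ω u k x ^ p * ‖fderiv ℝ u x‖ ^ (1 : ℝ) ∂μ ≤
      ∫ x, excess Ω u k x ^ (1 : ℝ) * ‖fderiv ℝ u x‖ ^ p ∂μ +
        ∫ x in noncriticalSuperlevel Ω u k, excess Ω u k x ^ (p + 1) ∂μ := by
  suffices hpt : ∀ w d : ℝ, 0 ≤ w → 0 ≤ d →
      w ^ p * d ^ (1 : ℝ) ≤ 1 * (w ^ (1 : ℝ) * d ^ p) + 1 * w ^ (p + 1) by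
    simpa only [one_mul] using
      integral_excess_rpow_mul_le_add hΩ hu hK (by linarith) (by linarith) one_pos hpt
  intro w d hw hd
  calc w ^ p * d ^ (1 : ℝ) = w * (d * w ^ (p - 1)) := by
        rw [Real.rpow_one, ← mul_self_rpow_sub_one hw (by linarith)]; ring
    _ ≤ w * (w ^ p + d ^ p) := by
      gcongr
      simpa using mul_rpow_sub_one_le_add hp one_pos hw hd
    _ = _ := by rw [Real.rpow_add_one' hw (by linarith), Real.rpow_one]; ring

lemma exists_integral_norm_fderiv_excess_rpow_le [FiniteDimensional ℝ E] {V : E → E}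
    {g : E → ℝ} {C₁ B k₀ : ℝ} (h : WeakDivIneq 1 V g Ω μ) (hΩ : IsOpen Ω)
    (hV : LocallyIntegrableOn V Ω μ) (hg : LocallyIntegrableOn g Ω μ) (hu : ContDiffOn ℝ 1 u Ω)
    (hp : 1 < p) (hC₁ : 0 < C₁) (hB : 0 ≤ B)
    (hcoer : ∀ x ∈ Ω, C₁ * ‖fderiv ℝ u x‖ ^ p ≤ fderiv ℝ u x (V x))
    (hgB : ∀ x ∈ Ω, k₀ ≤ u x → g x ≤ B * ‖fderiv ℝ u x‖ ^ (p - 1)) :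
    ∃ L : ℝ, ∀ k ≥ k₀, IsCompact {x ∈ Ω | k ≤ u x} →
      ∫ x, ‖fderiv ℝ (fun y => excess Ω u k y ^ (p + 1)) x‖ ∂μ ≤
        L * ∫ x in noncriticalSuperlevel Ω u k, excess Ω u k x ^ (p + 1) ∂μ := by
  set ε := C₁ / (B + 1)
  have hε : 0 < ε := by positivity
  have hBε : B * ε ≤ C₁ := by
    rw [mul_div_assoc', div_le_iff₀ (by positivity)]
    linarith
  refine ⟨(p + 1) * (B * ε⁻¹ ^ (p - 1) / C₁ + 1), fun k hk hK => ?_⟩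
  set X := ∫ x, excess Ω u k x ^ (1 : ℝ) * ‖fderiv ℝ u x‖ ^ p ∂μ
  set I := ∫ x in noncriticalSuperlevel Ω u k, excess Ω u k x ^ (p + 1) ∂μ
  have hX : X ≤ B * ε⁻¹ ^ (p - 1) / C₁ * I := by
    have hX0 : 0 ≤ X := integral_nonneg fun x =>
      mul_nonneg (Real.rpow_nonneg (excess_nonneg x) _) (by positivity)
    have hcacc := (caccioppoli_excess h hΩ hV hg hu hK hp hcoer
      fun x hx hkx => hgB x hx (hk.le.trans hkx)).trans
        (mul_le_mul_of_nonneg_left (integral_excess_sq_mul_norm_fderiv_rpow_le hΩ hu hK hp hε) hB)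
    have habsorb : B * ε * X ≤ C₁ * X := by gcongr
    rw [div_mul_eq_mul_div, le_div_iff₀ hC₁]
    linarith
  calc ∫ x, ‖fderiv ℝ (fun y => excess Ω u k y ^ (p + 1)) x‖ ∂μ
      = ∫ x, (p + 1) * (excess Ω u k x ^ p * ‖fderiv ℝ u x‖ ^ (1 : ℝ)) ∂μ := by
        congr with x
        rw [fderiv_excess_rpow hΩ hu hK (by linarith), norm_smul, Real.norm_of_nonneg,
          add_sub_cancel_right, Real.rpow_one, mul_assoc]
        exact mul_nonneg (by linarith) (Real.rpow_nonneg (excess_nonneg x) _)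
    _ ≤ (p + 1) * (X + I) := by
        rw [integral_const_mul]
        gcongr
        exact integral_excess_rpow_mul_norm_fderiv_le hΩ hu hK hp
    _ ≤ _ := by
        rw [mul_assoc]
        gcongr
        linarith

end Energy

section Sobolev

open Module
open scoped NNReal

variable {E F : Type*} [NormedAddCommGroup E] [NormedSpace ℝ E] [FiniteDimensional ℝ E]
  [MeasurableSpace E] [BorelSpace E] (μ : Measure E) [μ.IsAddHaarMeasure]
  [NormedAddCommGroup F] [NormedSpace ℝ F]

lemma exists_eLpNorm_one_restrict_le_measure_rpow_mul (hE : 2 ≤ finrank ℝ E) :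
    ∃ C : ℝ≥0, ∀ z : E → F, ContDiff ℝ 1 z → HasCompactSupport z → ∀ S : Set E,
      eLpNorm z 1 (μ.restrict S) ≤
        C * μ S ^ (1 / (finrank ℝ E : ℝ)) * eLpNorm (fderiv ℝ z) 1 μ := by
  have hn : 1 < (finrank ℝ E : ℝ≥0) := by exact_mod_cast hE
  have hq := NNReal.HolderConjugate.conjExponent hn
  refine ⟨eLpNormLESNormFDerivOneConst μ (finrank ℝ E : ℝ≥0).conjExponent,
    fun z hz hzc S => ?_⟩
  set q := (finrank ℝ E : ℝ≥0).conjExponent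
  have hexp : 1 / (1 : ℝ≥0∞).toReal - 1 / (q : ℝ≥0∞).toReal = 1 / (finrank ℝ E : ℝ) := by
    have := hq.coe.inv_add_inv_eq_one
    rw [ENNReal.toReal_one, ENNReal.coe_toReal, one_div, one_div, one_div]
    simpa using (eq_sub_of_add_eq this).symm
  have hq1 : (1 : ℝ≥0∞) ≤ q := by exact_mod_cast hq.symm.lt.le
  calc eLpNorm z 1 (μ.restrict S)
      ≤ eLpNorm z q (μ.restrict S) * μ S ^ (1 / (finrank ℝ E : ℝ)) := by
        rw [← hexp, ← Measure.restrict_apply_univ S]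
        exact eLpNorm_le_eLpNorm_mul_rpow_measure_univ hq1 hz.continuous.aestronglyMeasurable
    _ ≤ eLpNorm z q μ * μ S ^ (1 / (finrank ℝ E : ℝ)) := by
        gcongr
        exact Measure.restrict_le_self
    _ ≤ _ := by
        rw [mul_right_comm]
        gcongr
        exact eLpNorm_le_eLpNorm_fderiv_one μ hz hzc hq

lemma exists_pos_forall_eq_zero_of_integral_norm_fderiv_le (hE : 2 ≤ finrank ℝ E) (L : ℝ) :
    ∃ δ : ℝ≥0∞, 0 < δ ∧ ∀ (z : E → F) (S : Set E), ContDiff ℝ 1 z → HasCompactSupport z →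
      μ S < δ → ∫ x, ‖fderiv ℝ z x‖ ∂μ ≤ L * ∫ x in S, ‖z x‖ ∂μ → z = 0 := by
  obtain ⟨C, hSob⟩ := exists_eLpNorm_one_restrict_le_measure_rpow_mul (F := F) μ hE
  have hn : 0 < 1 / (finrank ℝ E : ℝ) := by positivity
  have hsmall : ∀ᶠ t : ℝ≥0∞ in nhds 0,
      C * t ^ (1 / (finrank ℝ E : ℝ)) * ENNReal.ofReal L < 1 := by
    have hpow := (ENNReal.continuous_rpow_const (y := 1 / (finrank ℝ E : ℝ))).tendsto 0
    have hlim := ENNReal.Tendsto.mul_const (b := ENNReal.ofReal L)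
      (ENNReal.Tendsto.const_mul (a := C) hpow (.inr ENNReal.coe_ne_top))
      (.inr ENNReal.ofReal_ne_top)
    rw [ENNReal.zero_rpow_of_pos hn, mul_zero, zero_mul] at hlim
    exact hlim.eventually_lt_const one_pos
  obtain ⟨δ, hδ, hδ1⟩ := ENNReal.nhds_zero_basis.eventually_iff.1 hsmall
  refine ⟨δ, hδ, fun z S hz hzc hS hL => ?_⟩
  have hzi : Integrable z μ := hz.continuous.integrable_of_hasCompactSupport hzc
  have hdi : Integrable (fderiv ℝ z) μ :=
    (hz.continuous_fderiv one_ne_zero).integrable_of_hasCompactSupport (hzc.fderiv ℝ)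
  have hgrad : eLpNorm (fderiv ℝ z) 1 μ ≤ ENNReal.ofReal L * eLpNorm z 1 (μ.restrict S) := by
    rw [eLpNorm_one_eq_lintegral_enorm, eLpNorm_one_eq_lintegral_enorm,
      ← ofReal_integral_norm_eq_lintegral_enorm hdi,
      ← ofReal_integral_norm_eq_lintegral_enorm hzi.integrableOn,
      ← ENNReal.ofReal_mul' (integral_nonneg fun x => norm_nonneg _)]
    exact ENNReal.ofReal_le_ofReal hL
  have hzS : eLpNorm z 1 (μ.restrict S) = 0 := by
    by_contra h0
    have hlt := ENNReal.mul_lt_mul_left h0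
      (memLp_one_iff_integrable.2 hzi.integrableOn).eLpNorm_ne_top (hδ1 hS)
    rw [one_mul, mul_assoc] at hlt
    exact hlt.not_ge ((hSob z hz hzc S).trans (by gcongr))
  have hz0 : eLpNorm z 1 μ = 0 := by
    have := hSob z hz hzc univ
    rw [nonpos_iff_eq_zero.1 (hgrad.trans_eq (by rw [hzS, mul_zero])), mul_zero,
      Measure.restrict_univ] at this
    exact nonpos_iff_eq_zero.1 this
  rw [eLpNorm_eq_zero_iff hz.continuous.aestronglyMeasurable one_ne_zero] at hz0
  exact (hz.continuous.ae_eq_iff_eq μ continuous_const).1 hz0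

end Sobolev

section MaximumPrinciple

open Module
open scoped ContDiff

variable {E : Type*} [NormedAddCommGroup E] [NormedSpace ℝ E] [MeasurableSpace E] [BorelSpace E]
  {μ : Measure E} {Ω : Set E} {u : E → ℝ} {k₀ : ℝ} {x₀ : E}

lemma exists_measure_noncriticalSuperlevel_lt [IsFiniteMeasureOnCompacts μ] (hΩ : IsOpen Ω)
    (hu : ContDiffOn ℝ 1 u Ω) (hmax : IsMaxOn u Ω x₀) (hk₀ : k₀ < u x₀)
    (hK : IsCompact {x ∈ Ω | k₀ ≤ u x}) {δ : ℝ≥0∞} (hδ : 0 < δ) :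
    ∃ k ∈ Ioo k₀ (u x₀), μ (noncriticalSuperlevel Ω u k) < δ := by
  obtain ⟨κ, hκ, hκ_mem, hκ_lim⟩ := exists_seq_strictMono_tendsto' hk₀
  have hinter : ⋂ j, noncriticalSuperlevel Ω u (κ j) = ∅ := by
    refine eq_empty_of_forall_notMem fun x hx => ?_
    rw [mem_iInter] at hx
    have hx_max : u x₀ ≤ u x := le_of_tendsto' hκ_lim fun j => (hx j).2.1.le
    have hx_localMax : IsLocalMax u x := by
      filter_upwards [hΩ.mem_nhds (hx 0).1] with y hy
      exact (hmax hy).trans hx_max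
    exact (hx 0).2.2 hx_localMax.fderiv_eq_zero
  have hsub : noncriticalSuperlevel Ω u (κ 0) ⊆ {x ∈ Ω | k₀ ≤ u x} :=
    fun x hx => ⟨hx.1, ((hκ_mem 0).1.trans hx.2.1).le⟩
  have hlim := tendsto_measure_iInter_atTop (μ := μ)
    (s := fun j => noncriticalSuperlevel Ω u (κ j))
    (fun j => (isOpen_noncriticalSuperlevel hΩ hu).nullMeasurableSet)
    (fun i j hij x hx => ⟨hx.1, (hκ.monotone hij).trans_lt hx.2.1, hx.2.2⟩)
    ⟨0, measure_ne_top_of_subset hsub hK.measure_ne_top⟩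
  rw [hinter, measure_empty] at hlim
  obtain ⟨j, hj⟩ := (hlim.eventually_lt_const hδ).exists
  exact ⟨κ j, hκ_mem j, hj⟩

variable [FiniteDimensional ℝ E] [μ.IsAddHaarMeasure] {V : E → E} {g : E → ℝ} {p C₁ : ℝ}

lemma WeakDivIneq.le_of_isMaxOn {B : ℝ} (h : WeakDivIneq 1 V g Ω μ) (hE : 2 ≤ finrank ℝ E)
    (hΩ : IsOpen Ω) (hV : LocallyIntegrableOn V Ω μ) (hg : LocallyIntegrableOn g Ω μ)
    (hu : ContDiffOn ℝ 1 u Ω) (hp : 1 < p) (hC₁ : 0 < C₁) (hB : 0 ≤ B)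
    (hcoer : ∀ x ∈ Ω, C₁ * ‖fderiv ℝ u x‖ ^ p ≤ fderiv ℝ u x (V x))
    (hgB : ∀ x ∈ Ω, k₀ ≤ u x → g x ≤ B * ‖fderiv ℝ u x‖ ^ (p - 1))
    (hK : IsCompact {x ∈ Ω | k₀ ≤ u x}) (hx₀ : x₀ ∈ Ω) (hmax : IsMaxOn u Ω x₀) :
    u x₀ ≤ k₀ := by
  by_contra! hk₀
  obtain ⟨L, hL⟩ := exists_integral_norm_fderiv_excess_rpow_le h hΩ hV hg hu hp hC₁ hB hcoer hgB
  obtain ⟨δ, hδ, hsmall⟩ :=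
    exists_pos_forall_eq_zero_of_integral_norm_fderiv_le (F := ℝ) μ hE L
  obtain ⟨k, ⟨hk₀k, hkx₀⟩, hkδ⟩ :=
    exists_measure_noncriticalSuperlevel_lt (μ := μ) hΩ hu hmax hk₀ hK hδ
  have hKk : IsCompact {x ∈ Ω | k ≤ u x} := isCompact_superlevel_of_le hu.continuousOn hK hk₀k.le
  have hnorm (x : E) : ‖excess Ω u k x ^ (p + 1)‖ = excess Ω u k x ^ (p + 1) :=
    Real.norm_of_nonneg (Real.rpow_nonneg (excess_nonneg x) _)
  have hzero := hsmall (fun x => excess Ω u k x ^ (p + 1)) _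
    (contDiff_excess_rpow hΩ hu hKk (by linarith))
    (hasCompactSupport_excess_rpow hKk (by linarith)) hkδ
    (by simpa only [hnorm] using hL k hk₀k.le hKk)
  have hx₀_supp : x₀ ∈ Function.support fun x => excess Ω u k x ^ (p + 1) := by
    rw [support_excess_rpow (by linarith)]
    exact ⟨hx₀, hkx₀⟩
  exact hx₀_supp (congrFun hzero x₀)

lemma WeakDivIneq.le_of_forall_frontier_le (h : WeakDivIneq ∞ V g Ω μ) (hE : 2 ≤ finrank ℝ E)
    (hΩ : IsOpen Ω) (hΩb : Bornology.IsBounded Ω) (hV : LocallyIntegrableOn V Ω μ)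
    (hg : LocallyIntegrableOn g Ω μ) (hu : ContDiffOn ℝ 1 u Ω) (huc : ContinuousOn u (closure Ω))
    (hp : 1 < p) (hC₁ : 0 < C₁)
    (hcoer : ∀ x ∈ Ω, C₁ * ‖fderiv ℝ u x‖ ^ p ≤ fderiv ℝ u x (V x))
    (hgB : ∀ K ⊆ Ω, IsCompact K → ∃ B ≥ 0, ∀ x ∈ K, g x ≤ B * ‖fderiv ℝ u x‖ ^ (p - 1))
    {m : ℝ} (hm : ∀ x ∈ frontier Ω, u x ≤ m) {x : E} (hx : x ∈ Ω) : u x ≤ m := by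
  by_contra! hmx
  obtain ⟨x₀, hx₀, hmax⟩ :=
    hΩb.isCompact_closure.exists_isMaxOn ⟨x, subset_closure hx⟩ huc
  obtain ⟨k₀, hmk₀, hk₀⟩ := exists_between (hmx.trans_le (hmax (subset_closure hx)))
  have hinterior {y : E} (hy : y ∈ closure Ω) (hky : k₀ ≤ u y) : y ∈ Ω := by
    by_contra hyΩ
    exact (hmk₀.trans_le hky).not_ge (hm y (hΩ.frontier_eq ▸ ⟨hy, hyΩ⟩))
  have hlevel : {y ∈ Ω | k₀ ≤ u y} = closure Ω ∩ u ⁻¹' Ici k₀ :=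
    Subset.antisymm (fun y hy => ⟨subset_closure hy.1, hy.2⟩)
      fun y hy => ⟨hinterior hy.1 hy.2, hy.2⟩
  have hK : IsCompact {y ∈ Ω | k₀ ≤ u y} := by
    rw [hlevel]
    exact hΩb.isCompact_closure.of_isClosed_subset
      (huc.preimage_isClosed_of_isClosed isClosed_closure isClosed_Ici) inter_subset_left
  obtain ⟨B, hB, hgB⟩ := hgB _ (fun y hy => hy.1) hK
  exact hk₀.not_ge ((h.of_smooth hΩ hV hg).le_of_isMaxOn hE hΩ hV hg hu hp hC₁ hB hcoer
    (fun y hy hky => hgB y ⟨hy, hky⟩) hK (hinterior hx₀ hk₀.le) (hmax.on_subset subset_closure))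

end MaximumPrinciple

lemma sSup_image_frontier_eq_sSup_image_closure {E : Type*} [NormedAddCommGroup E]
    [NormedSpace ℝ E] [Nontrivial E] [ProperSpace E] {Ω : Set E} {u : E → ℝ}
    (hΩb : Bornology.IsBounded Ω) (huc : ContinuousOn u (closure Ω))
    (hmax : ∀ m, (∀ x ∈ frontier Ω, u x ≤ m) → ∀ x ∈ Ω, u x ≤ m) :
    sSup (u '' frontier Ω) = sSup (u '' closure Ω) := by
  rcases Ω.eq_empty_or_nonempty with rfl | hne
  · simp
  have hbdd : BddAbove (u '' closure Ω) :=
    (hΩb.isCompact_closure.image_of_continuousOn huc).bddAbove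
  have hfrontier : (frontier Ω).Nonempty :=
    nonempty_frontier_iff.2 ⟨hne, fun h => NormedSpace.unbounded_univ ℝ E (h ▸ hΩb)⟩
  have hsub : u '' frontier Ω ⊆ u '' closure Ω := image_mono frontier_subset_closure
  have hle (x : E) (hx : x ∈ frontier Ω) : u x ≤ sSup (u '' frontier Ω) :=
    le_csSup (hbdd.mono hsub) (mem_image_of_mem u hx)
  refine (csSup_le_csSup hbdd (hfrontier.image u) hsub).antisymm
    (csSup_le (hne.closure.image u) (forall_mem_image.2 fun x hx => ?_))
  rw [closure_eq_self_union_frontier] at hx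
  exact hx.elim (hmax _ hle x) (hle x)

section WeakSolutions

open scoped ContDiff

section Gradient

variable {E : Type*} [NormedAddCommGroup E] [InnerProductSpace ℝ E] [CompleteSpace E]

lemma norm_gradient (u : E → ℝ) (x : E) : ‖gradient u x‖ = ‖fderiv ℝ u x‖ := by
  rw [gradient, LinearIsometryEquiv.norm_map]

lemma gradient_of_notMem_tsupport {φ : E → ℝ} {x : E} (hx : x ∉ tsupport φ) :
    gradient φ x = 0 := by
  rw [gradient, fderiv_of_notMem_tsupport ℝ hx, map_zero]

lemma measurable_gradient [MeasurableSpace E] [BorelSpace E] (u : E → ℝ) :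
    Measurable (gradient u) :=
  (InnerProductSpace.toDual ℝ E).symm.continuous.measurable.comp (measurable_fderiv ℝ u)

end Gradient

variable {n : ℕ} {A : Euc n → Euc n → Euc n} {b u : Euc n → ℝ} {α p C₁ C₂ : ℝ} {Ω : Set (Euc n)}

lemma IsWeakSol.mono {a : Euc n → ℝ} {U W : Set (Euc n)} (h : IsWeakSol A b α a U u)
    (hWU : W ⊆ U) : IsWeakSol A b α a W u := by
  intro φ hφ hc hφW hφ0
  have hrestrict {f : Euc n → ℝ} (hf : ∀ x ∉ tsupport φ, f x = 0) :
      ∫ x in W, f x = ∫ x in U, f x := by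
    rw [setIntegral_eq_integral_of_forall_compl_eq_zero fun x hx => hf x fun h => hx (hφW h),
      setIntegral_eq_integral_of_forall_compl_eq_zero fun x hx => hf x fun h => hx (hWU (hφW h))]
  rw [hrestrict fun x hx => by rw [image_eq_zero_of_notMem_tsupport hx, mul_zero],
    hrestrict fun x hx => by rw [gradient_of_notMem_tsupport hx, inner_zero_right],
    hrestrict fun x hx => by rw [image_eq_zero_of_notMem_tsupport hx, mul_zero]]
  exact h φ hφ hc (hφW.trans hWU) hφ0

lemma IsWeakSol.weakDivIneq (h : IsWeakSol A b α (fun _ => 0) Ω u) :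
    WeakDivIneq ∞ (fun x => A x (gradient u x)) (fun x => b x * ‖gradient u x‖ ^ α) Ω volume := by
  intro φ hφ hc hφΩ hφ0
  have hset {f : Euc n → ℝ} (hf : ∀ x ∉ tsupport φ, f x = 0) : ∫ x in Ω, f x = ∫ x, f x :=
    setIntegral_eq_integral_of_forall_compl_eq_zero fun x hx => hf x fun h => hx (hφΩ h)
  have hφ_ineq := h φ hφ hc hφΩ hφ0
  rw [hset fun _ _ => by rw [zero_mul],
    hset fun x hx => by rw [gradient_of_notMem_tsupport hx, inner_zero_right],
    hset fun x hx => by rw [image_eq_zero_of_notMem_tsupport hx, mul_zero]] at hφ_ineq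
  simp only [inner_gradient_right, conj_trivial, zero_mul, integral_zero] at hφ_ineq
  exact le_neg_add_iff_le.1 hφ_ineq

lemma StructCond.locallyIntegrableOn_gradient (hA : StructCond A p C₁ C₂) (hp : 1 ≤ p)
    (hΩ : IsOpen Ω) (hu : ContDiffOn ℝ 1 u Ω) :
    LocallyIntegrableOn (fun x => A x (gradient u x)) Ω := by
  have hbound : LocallyIntegrableOn (fun x => C₂ * ‖fderiv ℝ u x‖ ^ (p - 1)) Ω :=
    (continuousOn_const.mul ((hu.continuousOn_fderiv_of_isOpen hΩ le_rfl).norm.rpow_const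
      fun _ _ => .inr (by linarith))).locallyIntegrableOn hΩ.measurableSet
  refine hbound.mono
    (hA.1.comp (measurable_id.prodMk (measurable_gradient u))).aestronglyMeasurable
    (.of_forall fun x => ?_)
  rw [← norm_gradient]
  exact (hA.2 x _).2.trans (le_abs_self _)

lemma LocBdd.locallyIntegrable (hb : LocBdd b) (hbm : Measurable b) (hb0 : ∀ x, 0 ≤ b x) :
    LocallyIntegrable b := by
  refine locallyIntegrable_iff.2 fun K hK => ?_
  obtain ⟨B, hB⟩ := hb K hK
  refine Measure.integrableOn_of_bounded (M := B) hK.measure_ne_top hbm.aestronglyMeasurable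
    ((ae_restrict_mem hK.measurableSet).mono fun x hx => ?_)
  rw [Real.norm_of_nonneg (hb0 x)]
  exact hB x hx

lemma LocBdd.locallyIntegrableOn_mul_norm_gradient_rpow (hb : LocBdd b) (hbm : Measurable b)
    (hb0 : ∀ x, 0 ≤ b x) (hα : 0 ≤ α) (hΩ : IsOpen Ω) (hu : ContDiffOn ℝ 1 u Ω) :
    LocallyIntegrableOn (fun x => b x * ‖gradient u x‖ ^ α) Ω := by
  simp_rw [norm_gradient]
  exact ((hb.locallyIntegrable hbm hb0).locallyIntegrableOn Ω).mul_continuousOn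
    ((hu.continuousOn_fderiv_of_isOpen hΩ le_rfl).norm.rpow_const fun _ _ => .inr hα)
    hΩ.isLocallyClosed

lemma LocBdd.exists_mul_norm_gradient_rpow_le (hb : LocBdd b) (hb0 : ∀ x, 0 ≤ b x) (hp : 1 < p)
    (hα : p - 1 ≤ α) {K : Set (Euc n)} (hK : IsCompact K) (hu : ContinuousOn (fderiv ℝ u) K) :
    ∃ B ≥ 0, ∀ x ∈ K, b x * ‖gradient u x‖ ^ α ≤ B * ‖fderiv ℝ u x‖ ^ (p - 1) := by
  rcases K.eq_empty_or_nonempty with rfl | ⟨x₀, hx₀⟩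
  · exact ⟨0, le_rfl, fun x hx => hx.elim⟩
  obtain ⟨B₀, hB₀⟩ := hb K hK
  obtain ⟨G, hG⟩ := hK.exists_bound_of_continuousOn hu
  have hB₀0 : 0 ≤ B₀ := (hb0 x₀).trans (hB₀ x₀ hx₀)
  have hG0 : 0 ≤ G := (norm_nonneg _).trans (hG x₀ hx₀)
  refine ⟨B₀ * G ^ (α - (p - 1)), by positivity, fun x hx => ?_⟩
  calc b x * ‖gradient u x‖ ^ α
      = b x * ‖fderiv ℝ u x‖ ^ (α - (p - 1)) * ‖fderiv ℝ u x‖ ^ (p - 1) := by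
        rw [norm_gradient, mul_assoc, ← Real.rpow_add' (norm_nonneg _) (by linarith),
          sub_add_cancel]
    _ ≤ _ := by
        gcongr
        exacts [hB₀ x hx, hG x hx]

end WeakSolutions

theorem stmt_10_general {n : ℕ} (hn : 2 ≤ n) {p C₁ C₂ α : ℝ} (hp : 1 < p) (hC₁ : 0 < C₁)
    (hα : p - 1 ≤ α) {A : Euc n → Euc n → Euc n} (hA : StructCond A p C₁ C₂) {b : Euc n → ℝ}
    (hbm : Measurable b) (hb0 : ∀ x, 0 ≤ b x) (hbloc : LocBdd b) {Ω : Set (Euc n)}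
    (hΩ : IsOpen Ω) (hΩb : Bornology.IsBounded Ω) {u : Euc n → ℝ} (hu : ContDiffOn ℝ 1 u Ω)
    (huc : ContinuousOn u (closure Ω)) (hsol : IsWeakSol A b α (fun _ => 0) Ω u) :
    sSup (u '' frontier Ω) = sSup (u '' closure Ω) := by
  have hdim : 2 ≤ Module.finrank ℝ (Euc n) := by rwa [finrank_euclideanSpace_fin]
  have : Nontrivial (Euc n) := Module.nontrivial_of_finrank_pos (R := ℝ) (by omega)
  have hcoer : ∀ x ∈ Ω, C₁ * ‖fderiv ℝ u x‖ ^ p ≤ fderiv ℝ u x (A x (gradient u x)) := by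
    intro x _
    rw [← norm_gradient, ← inner_gradient_left]
    exact (hA.2 x _).1
  have hlower (K : Set (Euc n)) (hKΩ : K ⊆ Ω) (hK : IsCompact K) :=
    hbloc.exists_mul_norm_gradient_rpow_le hb0 hp hα hK
      ((hu.continuousOn_fderiv_of_isOpen hΩ le_rfl).mono hKΩ)
  exact sSup_image_frontier_eq_sSup_image_closure hΩb huc fun m hm x hx =>
    hsol.weakDivIneq.le_of_forall_frontier_le hdim hΩ hΩb
      (hA.locallyIntegrableOn_gradient hp.le hΩ hu)
      (hbloc.locallyIntegrableOn_mul_norm_gradient_rpow hbm hb0 (by linarith) hΩ hu) hu huc hp hC₁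
      hcoer hlower hm hx

/-- Corollary 4.2: for a nonnegative solution of `div A(x,Du) + b(x)|Du|^α ≥ 0` in `ℝⁿ`,
the maximum over the sphere `|x| = r` equals the maximum over the closed ball `|x| ≤ r`. -/
theorem stmt_10 (n : ℕ) (hn : 2 ≤ n) (p C₁ C₂ α : ℝ) (hp : 1 < p)
    (hC₁ : 0 < C₁) (hC₂ : 0 < C₂) (hα₁ : p - 1 ≤ α) (hα₂ : α ≤ p)
    (A : Euc n → Euc n → Euc n) (hA : StructCond A p C₁ C₂)
    (b : Euc n → ℝ) (hbm : Measurable b) (hb0 : ∀ x, 0 ≤ b x) (hbloc : LocBdd b)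
    (u : Euc n → ℝ) (hu : ContDiff ℝ 1 u) (hu0 : ∀ x, 0 ≤ u x)
    (hsol : IsWeakSol A b α (fun _ => 0) Set.univ u) :
    ∀ r : ℝ, 0 < r →
      sSup (u '' Metric.sphere (0 : Euc n) r) = sSup (u '' Metric.closedBall (0 : Euc n) r) := by
  intro r hr
  rw [← frontier_ball _ hr.ne', ← closure_ball _ hr.ne']
  exact stmt_10_general hn hp hC₁ hα₁ hA hbm hb0 hbloc isOpen_ball isBounded_ball hu.contDiffOn
    hu.continuous.continuousOn (hsol.mono (subset_univ _))
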